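/- Let G be a finite group, k a field whose characteristic does not divide the order of G, S a commutative k-algebra with an action of G by k-algebra automorphisms, and m ⊆ S a G-invariant ideal. Let R be a commutative k-algebra with G-action and f : S → R a G-equivariant k-algebra homomorphism making R a formally smooth S-algebra. Suppose there exists a G-equivariant k-algebra homomorphism s₁ : R → S/m such that s₁ ∘ f equals the quotient map S → S/m. Then for every integer n ≥ 1 there exists a G-equivariant k-algebra homomorphism sₙ : R → S/mⁿ such that sₙ ∘ f equals the quotient map S → S/mⁿ and the composition of sₙ with the projection S/mⁿ → S/m equals s₁. -/

import Mathlib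

universe u

/- Over a square-zero extension `B → C`, the lifts of a fixed homomorphism `R → C` to `B` are closed
under affine combinations: the defect of multiplicativity of a combination `φ̄ = ∑ wᵢ φᵢ` is the
covariance `∑ wᵢ (φᵢ r - φ̄ r) (φᵢ s - φ̄ s)`, whose summands are products of two elements of the
kernel. If `|G|` is invertible, any lift of an equivariant homomorphism can therefore be replaced by
the average of its `G`-conjugates, which is an equivariant lift. Formal smoothness provides a lift
through each `S/mⁿ⁺¹ → S/mⁿ`, and averaging makes it equivariant. -/

section AffineCombination

variable {k ι R B C : Type*} [CommSemiring k] [Fintype ι] [Semiring R] [Ring B] [Ring C]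
  [Algebra k R] [Algebra k B] [Algebra k C]

theorem sum_smul_sub_mul_sub (w : ι → k) (hw : ∑ i, w i = 1) (x y : ι → B) :
    ∑ i, w i • ((x i - ∑ j, w j • x j) * (y i - ∑ j, w j • y j)) =
      ∑ i, w i • (x i * y i) - (∑ i, w i • x i) * ∑ i, w i • y i := by
  simp only [sub_mul, mul_sub, smul_sub, Finset.sum_sub_distrib, ← Finset.sum_smul, hw, one_smul,
    ← smul_mul_assoc, ← Finset.sum_mul]
  simp only [smul_mul_assoc, ← mul_smul_comm, ← Finset.mul_sum]
  abel

theorem sub_sum_smul_mem_ker (w : ι → k) (hw : ∑ i, w i = 1) {π : B →ₐ[k] C} {x : ι → B} {c : C}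
    (hx : ∀ i, π (x i) = c) (i : ι) : x i - ∑ j, w j • x j ∈ RingHom.ker π := by
  simp only [RingHom.mem_ker, map_sub, map_sum, map_smul, hx, ← Finset.sum_smul, hw, one_smul,
    sub_self]

theorem sum_smul_mul_of_ker_mul_self_eq_bot (w : ι → k) (hw : ∑ i, w i = 1) {π : B →ₐ[k] C}
    (hπ : RingHom.ker π * RingHom.ker π = ⊥) {x y : ι → B} {c d : C} (hx : ∀ i, π (x i) = c)
    (hy : ∀ i, π (y i) = d) :
    ∑ i, w i • (x i * y i) = (∑ i, w i • x i) * ∑ i, w i • y i := by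
  rw [← sub_eq_zero, ← sum_smul_sub_mul_sub w hw]
  refine Finset.sum_eq_zero fun i _ => ?_
  have product_mem := Ideal.mul_mem_mul (sub_sum_smul_mem_ker w hw hx i)
    (sub_sum_smul_mem_ker w hw hy i)
  rw [hπ, Ideal.mem_bot] at product_mem
  rw [product_mem, smul_zero]

/-- The affine combination `∑ wᵢ φᵢ` of homomorphisms `φᵢ : R → B` lifting the same `p : R → C`
along a homomorphism `π : B → C` with square-zero kernel, as an algebra homomorphism. It serves to
average the conjugates of a lift over a finite group. -/
def affineCombination (w : ι → k) (hw : ∑ i, w i = 1) {π : B →ₐ[k] C}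
    (hπ : RingHom.ker π * RingHom.ker π = ⊥) {p : R →ₐ[k] C} {φ : ι → R →ₐ[k] B}
    (hφ : ∀ i, π.comp (φ i) = p) : R →ₐ[k] B :=
  AlgHom.ofLinearMap (∑ i, w i • (φ i).toLinearMap)
    (by simp [← Finset.sum_smul, hw])
    (fun r s => by
      simpa using sum_smul_mul_of_ker_mul_self_eq_bot w hw hπ (fun i => DFunLike.congr_fun (hφ i) r)
        (fun i => DFunLike.congr_fun (hφ i) s))

variable (w : ι → k) (hw : ∑ i, w i = 1) {π : B →ₐ[k] C} (hπ : RingHom.ker π * RingHom.ker π = ⊥)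
  {p : R →ₐ[k] C} {φ : ι → R →ₐ[k] B} (hφ : ∀ i, π.comp (φ i) = p)

theorem affineCombination_apply (r : R) :
    affineCombination w hw hπ hφ r = ∑ i, w i • φ i r := by
  simp [affineCombination]

theorem comp_affineCombination : π.comp (affineCombination w hw hπ hφ) = p := by
  ext r
  have lift_apply (i : ι) : π (φ i r) = p r := DFunLike.congr_fun (hφ i) r
  simp only [AlgHom.comp_apply, affineCombination_apply, map_sum, map_smul, lift_apply,
    ← Finset.sum_smul, hw, one_smul]

theorem affineCombination_apply_of_forall_eq {r : R} {b : B} (hb : ∀ i, φ i r = b) :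
    affineCombination w hw hπ hφ r = b := by
  simp only [affineCombination_apply, hb, ← Finset.sum_smul, hw, one_smul]

end AffineCombination

section EquivariantLift

variable {k G R B C : Type*} [CommSemiring k] [Group G]

section Conj

variable [Semiring R] [Semiring B] [Algebra k R] [Algebra k B] [MulSemiringAction G R]
  [MulSemiringAction G B] [SMulCommClass G k R] [SMulCommClass G k B]

/-- The conjugate `r ↦ g • h (g⁻¹ • r)` of a homomorphism `h` between `G`-algebras. The
equivariant homomorphisms are those equal to all their conjugates, so averaging over conjugates
produces them. -/
def conjAlgHom (g : G) (h : R →ₐ[k] B) : R →ₐ[k] B :=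
  ((MulSemiringAction.toAlgHom k B g).comp h).comp (MulSemiringAction.toAlgHom k R g⁻¹)

theorem conjAlgHom_apply (g : G) (h : R →ₐ[k] B) (r : R) :
    conjAlgHom g h r = g • h (g⁻¹ • r) :=
  rfl

theorem conjAlgHom_mul_smul (g g' : G) (h : R →ₐ[k] B) (r : R) :
    conjAlgHom (g * g') h (g • r) = g • conjAlgHom g' h r := by
  simp only [conjAlgHom_apply, mul_inv_rev, mul_smul, inv_smul_smul]

theorem comp_conjAlgHom [Semiring C] [Algebra k C] [SMul G C] {π : B →ₐ[k] C}
    (hπG : ∀ (g : G) b, π (g • b) = g • π b) {p : R →ₐ[k] C}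
    (hpG : ∀ (g : G) r, p (g • r) = g • p r) {h : R →ₐ[k] B}
    (hh : π.comp h = p) (g : G) : π.comp (conjAlgHom g h) = p := by
  ext r
  calc π (g • h (g⁻¹ • r)) = g • (π.comp h) (g⁻¹ • r) := hπG g _
    _ = p r := by rw [hh, ← hpG, smul_inv_smul]

end Conj

variable [Semiring R] [Ring B] [Ring C] [Algebra k R] [Algebra k B] [Algebra k C]
  [MulSemiringAction G R] [MulSemiringAction G B] [SMul G C]
  [SMulCommClass G k R] [SMulCommClass G k B]

theorem exists_equivariant_lift_of_lift [Fintype G] (hG : IsUnit (Fintype.card G : k))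
    {π : B →ₐ[k] C} (hπ : RingHom.ker π * RingHom.ker π = ⊥)
    (hπG : ∀ (g : G) b, π (g • b) = g • π b) {p : R →ₐ[k] C}
    (hpG : ∀ (g : G) r, p (g • r) = g • p r) {h : R →ₐ[k] B} (hh : π.comp h = p) :
    ∃ h' : R →ₐ[k] B, (∀ (g : G) r, h' (g • r) = g • h' r) ∧ π.comp h' = p ∧
      ∀ r, (∀ g : G, h (g • r) = g • h r) → h' r = h r := by
  obtain ⟨c, hc⟩ := hG.exists_left_inv
  have sum_weights : ∑ _g : G, c = 1 := by
    rw [Finset.sum_const, Finset.card_univ, nsmul_eq_mul, mul_comm, hc]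
  have hconj := comp_conjAlgHom hπG hpG hh
  refine ⟨affineCombination _ sum_weights hπ hconj, fun g r => ?_,
    comp_affineCombination _ sum_weights hπ hconj, fun r hr =>
      affineCombination_apply_of_forall_eq _ sum_weights hπ hconj fun g => ?_⟩
  · rw [affineCombination_apply, affineCombination_apply, Finset.smul_sum,
      ← Equiv.sum_comp (Equiv.mulLeft g)]
    simp only [Equiv.coe_mulLeft, conjAlgHom_mul_smul, smul_comm g c]
  · rw [conjAlgHom_apply, hr, smul_inv_smul]

end EquivariantLift

section SquareZeroLifting

variable {k R : Type*} {S : Type u} [CommSemiring k] [Semiring R] [Semiring S] [Algebra k R]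
  [Algebra k S]

/-- The infinitesimal lifting property defining formal smoothness of `f : S → R`, phrased without
choosing an `S`-algebra structure: the test algebra `A` receives a structure map `σ` from `S`. The
test algebras live in the universe of `S`. -/
def HasSquareZeroLifting (f : S →ₐ[k] R) : Prop :=
  ∀ (A : Type u) [CommRing A] [Algebra k A] (I : Ideal A), I ^ 2 = ⊥ →
    ∀ (σ : S →ₐ[k] A) (p : R →ₐ[k] A ⧸ I), p.comp f = (Ideal.Quotient.mkₐ k I).comp σ →
      ∃ h : R →ₐ[k] A, (Ideal.Quotient.mkₐ k I).comp h = p ∧ h.comp f = σ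

namespace HasSquareZeroLifting

variable {f : S →ₐ[k] R} {A : Type u} {C : Type*} [CommRing A] [Ring C] [Algebra k A]
  [Algebra k C] {π : A →ₐ[k] C} {σ : S →ₐ[k] A} {p : R →ₐ[k] C}

theorem exists_lift_of_surjective (hf : HasSquareZeroLifting f) (hπ : Function.Surjective π)
    (hker : RingHom.ker π ^ 2 = ⊥) (hp : p.comp f = π.comp σ) :
    ∃ h : R →ₐ[k] A, π.comp h = p ∧ h.comp f = σ := by
  let e := Ideal.quotientKerAlgEquivOfSurjective hπ
  have hep : (e.symm.toAlgHom.comp p).comp f = (Ideal.Quotient.mkₐ k _).comp σ := by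
    rw [AlgHom.comp_assoc, hp]
    ext s
    exact Ideal.quotientKerAlgEquivOfSurjective_symm_apply hπ (σ s)
  obtain ⟨h, hlift, hhf⟩ := hf A _ hker σ _ hep
  refine ⟨h, AlgHom.ext fun r => ?_, hhf⟩
  exact e.eq_symm_apply.mp (DFunLike.congr_fun hlift r)

theorem exists_equivariant_lift (hf : HasSquareZeroLifting f) {G : Type*} [Group G] [Fintype G]
    (hG : IsUnit (Fintype.card G : k)) [MulSemiringAction G R] [MulSemiringAction G A] [SMul G S]
    [SMul G C] [SMulCommClass G k R] [SMulCommClass G k A]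
    (hfG : ∀ (g : G) s, f (g • s) = g • f s) (hπ : Function.Surjective π)
    (hker : RingHom.ker π ^ 2 = ⊥) (hπG : ∀ (g : G) a, π (g • a) = g • π a)
    (hσG : ∀ (g : G) s, σ (g • s) = g • σ s) (hpG : ∀ (g : G) r, p (g • r) = g • p r)
    (hp : p.comp f = π.comp σ) :
    ∃ h : R →ₐ[k] A, (∀ (g : G) r, h (g • r) = g • h r) ∧ π.comp h = p ∧ h.comp f = σ := by
  obtain ⟨h₀, hlift, hh₀f⟩ := hf.exists_lift_of_surjective hπ hker hp
  have h₀_apply (s : S) : h₀ (f s) = σ s := DFunLike.congr_fun hh₀f s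
  obtain ⟨h, hhG, hhp, hfix⟩ := exists_equivariant_lift_of_lift hG
    ((sq _).symm.trans hker) hπG hpG hlift
  refine ⟨h, hhG, hhp, AlgHom.ext fun s => ?_⟩
  calc h (f s) = h₀ (f s) := hfix _ fun g => by rw [← hfG, h₀_apply, h₀_apply, hσG]
    _ = σ s := h₀_apply s

end HasSquareZeroLifting

end SquareZeroLifting

section QuotientAction

variable {G S : Type*} [CommRing S]

/-- The action on `S ⧸ J` induced by an action on `S` preserving the ideal `J`, making
the projection `S → S ⧸ J` equivariant. Since invariance of `J` is a plain hypothesis, it is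
installed locally rather than as an instance. -/
abbrev quotientMulSemiringAction [Monoid G] [MulSemiringAction G S] (J : Ideal S)
    (hJ : ∀ (g : G), ∀ x ∈ J, g • x ∈ J) : MulSemiringAction G (S ⧸ J) where
  smul g := Ideal.quotientMap J (MulSemiringAction.toRingHom G S g) (hJ g)
  one_smul := Ideal.Quotient.mk_surjective.forall.2 fun a =>
    congrArg (Ideal.Quotient.mk J) (one_smul G a)
  mul_smul g g' := Ideal.Quotient.mk_surjective.forall.2 fun a =>
    congrArg (Ideal.Quotient.mk J) (mul_smul g g' a)
  smul_zero _ := map_zero _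
  smul_add _ := map_add _
  smul_one _ := map_one _
  smul_mul _ := map_mul _

theorem smul_mem_pow_of_forall_smul_mem [Monoid G] [MulSemiringAction G S] {J : Ideal S}
    (hJ : ∀ (g : G), ∀ x ∈ J, g • x ∈ J) (n : ℕ) (g : G) : ∀ x ∈ J ^ n, g • x ∈ J ^ n := by
  have map_le : J.map (MulSemiringAction.toRingHom G S g) ≤ J := Ideal.map_le_iff_le_comap.2 (hJ g)
  intro x hx
  have smul_mem_map := Ideal.mem_map_of_mem (MulSemiringAction.toRingHom G S g) hx
  rw [Ideal.map_pow] at smul_mem_map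
  exact Ideal.pow_right_mono map_le n smul_mem_map

theorem ker_factorₐ_sq_eq_bot (k : Type*) [CommSemiring k] [Algebra k S] {I J : Ideal S}
    (hIJ : I ≤ J) (hJI : J ^ 2 ≤ I) : RingHom.ker (Ideal.Quotient.factorₐ k hIJ) ^ 2 = ⊥ := by
  have ker_eq_map : RingHom.ker (Ideal.Quotient.factorₐ k hIJ) = J.map (Ideal.Quotient.mk I) :=
    Ideal.Quotient.factor_ker hIJ
  rw [ker_eq_map, ← Ideal.map_pow, Ideal.map_mk_eq_bot_of_le hJI]

end QuotientAction

section EquivariantSection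

variable {k R : Type*} {S : Type u} [CommSemiring k] [Semiring R] [CommRing S] [Algebra k R]
  [Algebra k S]

/-- `s : R → S ⧸ J` is a `G`-equivariant section of `f : S → R` modulo `J`. Equivariance is stated
on representatives in `S`, so that no action on `S ⧸ J` has to be chosen. -/
structure IsEquivariantSection (G : Type*) [SMul G S] [SMul G R] (f : S →ₐ[k] R) (J : Ideal S)
    (s : R →ₐ[k] S ⧸ J) : Prop where
  map_smul_eq_mk : ∀ (g : G) (r : R) (a : S), s r = Ideal.Quotient.mk J a →
    s (g • r) = Ideal.Quotient.mk J (g • a)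
  comp_eq_mkₐ : s.comp f = Ideal.Quotient.mkₐ k J

variable {G : Type*} [Group G] [Fintype G] [MulSemiringAction G S] [MulSemiringAction G R]
  [SMulCommClass G k S] [SMulCommClass G k R]

theorem IsEquivariantSection.exists_lift (hG : IsUnit (Fintype.card G : k)) {f : S →ₐ[k] R}
    (hfG : ∀ (g : G) s, f (g • s) = g • f s) (hf : HasSquareZeroLifting f) {I J : Ideal S}
    (hIJ : I ≤ J) (hJI : J ^ 2 ≤ I) (hI : ∀ (g : G), ∀ x ∈ I, g • x ∈ I)
    (hJ : ∀ (g : G), ∀ x ∈ J, g • x ∈ J) {s : R →ₐ[k] S ⧸ J}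
    (hs : IsEquivariantSection G f J s) :
    ∃ s' : R →ₐ[k] S ⧸ I, IsEquivariantSection G f I s' ∧
      (Ideal.Quotient.factorₐ k hIJ).comp s' = s := by
  let := quotientMulSemiringAction I hI
  let := quotientMulSemiringAction J hJ
  have : SMulCommClass G k (S ⧸ I) := ⟨fun g c => Ideal.Quotient.mk_surjective.forall.2 fun a =>
    congrArg (Ideal.Quotient.mk I) (smul_comm g c a)⟩
  have factor_smul (g : G) : ∀ b : S ⧸ I, Ideal.Quotient.factorₐ k hIJ (g • b) =
      g • Ideal.Quotient.factorₐ k hIJ b :=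
    Ideal.Quotient.mk_surjective.forall.2 fun _ => rfl
  have s_smul (g : G) (r : R) : s (g • r) = g • s r := by
    obtain ⟨a, ha⟩ := Ideal.Quotient.mk_surjective (s r)
    rw [hs.map_smul_eq_mk g r a ha.symm, ← ha]
    rfl
  obtain ⟨s', hs'G, hs's, hs'f⟩ := hf.exists_equivariant_lift hG hfG
    (σ := Ideal.Quotient.mkₐ k I) (Ideal.Quotient.factor_surjective hIJ)
    (ker_factorₐ_sq_eq_bot k hIJ hJI) factor_smul (fun _ _ => rfl) s_smul hs.comp_eq_mkₐ
  refine ⟨s', ⟨fun g r a ha => ?_, hs'f⟩, hs's⟩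
  rw [hs'G, ha]
  rfl

theorem stmt6_general (hG : IsUnit (Fintype.card G : k)) {m : Ideal S}
    (hmG : ∀ (g : G), ∀ x ∈ m, g • x ∈ m) {f : S →ₐ[k] R}
    (hfG : ∀ (g : G) s, f (g • s) = g • f s) (hf : HasSquareZeroLifting f)
    {s₁ : R →ₐ[k] S ⧸ m} (hs₁ : IsEquivariantSection G f m s₁) {n : ℕ} (hn : n ≠ 0) :
    ∃ sn : R →ₐ[k] S ⧸ m ^ n, IsEquivariantSection G f (m ^ n) sn ∧
      (Ideal.Quotient.factorₐ k (Ideal.pow_le_self hn)).comp sn = s₁ := by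
  induction n, Nat.one_le_iff_ne_zero.mpr hn using Nat.le_induction with
  | base =>
    exact hs₁.exists_lift hG hfG hf _ (Ideal.pow_le_pow_right one_le_two)
      (smul_mem_pow_of_forall_smul_mem hmG 1) hmG
  | succ n one_le ih =>
    obtain ⟨sn, hsn, hsn_s₁⟩ := ih (Nat.one_le_iff_ne_zero.mp one_le)
    have sq_le : (m ^ n) ^ 2 ≤ m ^ (n + 1) := by
      rw [← pow_mul]
      exact Ideal.pow_le_pow_right (by lia)
    obtain ⟨s, hs, hs_sn⟩ := hsn.exists_lift hG hfG hf (Ideal.pow_le_pow_right n.le_succ) sq_le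
      (smul_mem_pow_of_forall_smul_mem hmG (n + 1)) (smul_mem_pow_of_forall_smul_mem hmG n)
    refine ⟨s, hs, ?_⟩
    rw [← hsn_s₁, ← hs_sn, ← AlgHom.comp_assoc, Ideal.Quotient.factorₐ_comp]

end EquivariantSection

/-- Corollary 2.3 (algebraic content): a `G`-equivariant section modulo `m` of a
formally smooth equivariant morphism extends to `G`-equivariant sections modulo
every power `mⁿ`. Equivariance of maps into the quotients `S/mⁿ` is expressed via
the quotient map `Ideal.Quotient.mk`. -/
theorem stmt6 {k : Type u} [Field k] (G : Type u) [Group G] [Fintype G]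
    (hchar : ¬ (ringChar k ∣ Fintype.card G))
    {S R : Type u} [CommRing S] [CommRing R] [Algebra k S] [Algebra k R]
    [MulSemiringAction G S] [MulSemiringAction G R]
    [SMulCommClass G k S] [SMulCommClass G k R]
    (m : Ideal S) (hmG : ∀ (g : G), ∀ x ∈ m, g • x ∈ m)
    (f : S →ₐ[k] R) (hf : ∀ (g : G) (s : S), f (g • s) = g • f s)
    -- `R` is a formally smooth `S`-algebra (via `f`)
    (hsmooth : ∀ (A : Type u) [CommRing A] [Algebra k A] (I : Ideal A),
      I ^ 2 = ⊥ →
      ∀ (σ : S →ₐ[k] A) (p : R →ₐ[k] A ⧸ I),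
        p.comp f = (Ideal.Quotient.mkₐ k I).comp σ →
        ∃ h : R →ₐ[k] A, (Ideal.Quotient.mkₐ k I).comp h = p ∧ h.comp f = σ)
    (s₁ : R →ₐ[k] S ⧸ m)
    (hs₁f : s₁.comp f = Ideal.Quotient.mkₐ k m)
    -- `s₁` is `G`-equivariant for the action on `S ⧸ m` induced from `S`
    (hs₁G : ∀ (g : G) (r : R) (a : S), s₁ r = Ideal.Quotient.mk m a →
      s₁ (g • r) = Ideal.Quotient.mk m (g • a)) :
    ∀ n : ℕ, 1 ≤ n →
      ∃ sn : R →ₐ[k] S ⧸ (m ^ n),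
        (∀ (g : G) (r : R) (a : S), sn r = Ideal.Quotient.mk (m ^ n) a →
          sn (g • r) = Ideal.Quotient.mk (m ^ n) (g • a)) ∧
        sn.comp f = Ideal.Quotient.mkₐ k (m ^ n) ∧
        (∀ (r : R) (a : S), sn r = Ideal.Quotient.mk (m ^ n) a →
          s₁ r = Ideal.Quotient.mk m a) := by
  have isUnit_card : IsUnit (Fintype.card G : k) :=
    Ne.isUnit fun h => hchar ((ringChar.spec k _).1 h)
  intro n hn
  obtain ⟨sn, hsn, hcomp⟩ := stmt6_general isUnit_card hmG hf hsmooth ⟨hs₁G, hs₁f⟩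
    (Nat.one_le_iff_ne_zero.mp hn)
  exact ⟨sn, hsn.map_smul_eq_mk, hsn.comp_eq_mkₐ, fun r a h => by
    rw [← hcomp, AlgHom.comp_apply, h, Ideal.Quotient.factorₐ_apply_mk]⟩
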